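/- Fix x ∈ ℝ². Let ρ : ℝ² → ℝ and u = (u₁, u₂) : ℝ² → ℝ² be 5 times continuously differentiable with div u = ∂u₁/∂x₁ + ∂u₂/∂x₂ = 0 everywhere. For h > 0, d ∈ {1,2} with d' the other index, and a sign ±, let F^{d,±} denote the higher (+) or lower (−) face of the cell x + [0,h]² in dimension d, let R^{d,±} = h^{−1} ∫_{F^{d,±}} ρ dl and U^{d,±} = h^{−1} ∫_{F^{d,±}} u_d dl be exact face averages, and let Gρ^{d,±} (resp. Gu^{d,±}) be (1/(2h)) times the difference of the face averages of ρ (resp. of u_d) over the two faces obtained by translating F^{d,±} by +h e^{d'} and −h e^{d'}. Then there exist C > 0 and h₀ > 0 such that for all 0 < h < h₀, | (1/h) Σ_{d=1,2} Σ_{±} ± ( R^{d,±} U^{d,±} + (h²/12) Gρ^{d,±} Gu^{d,±} ) − h^{−2} ∫_{x + [0,h]²} (u · ∇ρ) | ≤ C h⁴. -/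

import Mathlib

open MeasureTheory

noncomputable section

/-- The square cell of side `h` with multi-index `j` anchored at `x`. -/
def fvCell (x : EuclideanSpace ℝ (Fin 2)) (h : ℝ) (j : Fin 2 → ℤ) :
    Set (EuclideanSpace ℝ (Fin 2)) :=
  {y | ∀ i, y i ∈ Set.Icc (x i + h * (j i : ℝ)) (x i + h * (j i : ℝ) + h)}

/-- The average of `f` over the cell of side `h` and multi-index `j`
anchored at `x`. -/
def cellAvg (f : EuclideanSpace ℝ (Fin 2) → ℝ) (x : EuclideanSpace ℝ (Fin 2))
    (h : ℝ) (j : Fin 2 → ℤ) : ℝ :=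
  (1 / h ^ 2) * ∫ y in fvCell x h j, f y

/-- The average of `f` over the segment from `a` to `b` (equal to `1/|b-a|`
times the one-dimensional Lebesgue integral of `f` along the segment). -/
def segAvg (f : EuclideanSpace ℝ (Fin 2) → ℝ) (a b : EuclideanSpace ℝ (Fin 2)) : ℝ :=
  ∫ s in (0 : ℝ)..1, f (a + s • (b - a))

/-- The `i`-th standard basis vector of ℝ². -/
def ev (i : Fin 2) : EuclideanSpace ℝ (Fin 2) := EuclideanSpace.single i 1

/-- The other index of `d` in `Fin 2`. -/
def otherIdx (d : Fin 2) : Fin 2 := if d = 0 then 1 else 0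

/-- The centered transverse difference of face averages of `g`: `1/(2h)` times
the difference of the averages of `g` over the translates of the face with
endpoints `a, b` by `+h e^{d'}` and `-h e^{d'}`. -/
def Gperp (g : EuclideanSpace ℝ (Fin 2) → ℝ) (h : ℝ) (d' : Fin 2)
    (a b : EuclideanSpace ℝ (Fin 2)) : ℝ :=
  (segAvg g (a + h • ev d') (b + h • ev d') - segAvg g (a - h • ev d') (b - h • ev d'))
    / (2 * h)

/-!
The divergence theorem turns the cell average of `div (ρ u)` into a sum of exact face integrals of
`ρ u_d`, so the error is `1 / h` times the difference of the face errors across the cell. On one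
face, the mean of a product minus the product of the means is `h² ∂ρ ∂u_d / 12 + O(h⁴)`, with
tangential derivatives at the midpoint, and the transverse correction cancels the `h²` term. By
Taylor expansion the remaining face error is `h⁴ L(y) + O(h⁵)`, where `y` is the lower corner of the
face and `L` is differentiable, so its difference across the cell is `O(h⁵)`.
-/

open Asymptotics Filter Topology

section Taylor

theorem abs_sub_sum_iteratedDeriv_le {φ : ℝ → ℝ} {n : ℕ} (hφ : ContDiff ℝ (n + 1) φ)
    {x₀ x M : ℝ} (hM : ∀ y ∈ Set.uIcc x₀ x, |iteratedDeriv (n + 1) φ y| ≤ M) :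
    |φ x - ∑ j ∈ Finset.range (n + 1), iteratedDeriv j φ x₀ / j.factorial * (x - x₀) ^ j| ≤
      M * |x - x₀| ^ (n + 1) / (n + 1).factorial := by
  rcases eq_or_ne x₀ x with rfl | hne
  · simp [Finset.sum_range_succ']
  obtain ⟨y, hy, hrem⟩ :=
    taylor_mean_remainder_lagrange_iteratedDeriv hne (hφ.contDiffOn (s := Set.uIcc x₀ x))
  have hpoly : taylorWithinEval φ n (Set.uIcc x₀ x) x₀ x =
      ∑ j ∈ Finset.range (n + 1), iteratedDeriv j φ x₀ / j.factorial * (x - x₀) ^ j := by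
    rw [taylor_within_apply]
    refine Finset.sum_congr rfl fun j hj ↦ ?_
    have hj' : (j : WithTop ℕ∞) ≤ n + 1 := by
      exact_mod_cast (Finset.mem_range.mp hj).le
    rw [iteratedDerivWithin_eq_iteratedDeriv (uniqueDiffOn_uIcc hne)
      (hφ.contDiffAt.of_le hj') Set.left_mem_uIcc, smul_eq_mul]
    ring
  rw [← hpoly, hrem, abs_div, abs_mul, abs_pow, Nat.abs_cast]
  gcongr
  exact hM y (Set.uIoo_subset_uIcc_self hy)

variable {E F : Type*} [NormedAddCommGroup E] [NormedSpace ℝ E] [NormedAddCommGroup F]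
  [NormedSpace ℝ F]

theorem iteratedDeriv_comp_line {f : E → F} {n : ℕ} (hf : ContDiff ℝ n f) (y v : E) {j : ℕ}
    (hj : j ≤ n) (s : ℝ) :
    iteratedDeriv j (fun t ↦ f (y + t • v)) s = iteratedFDeriv ℝ j f (y + s • v) fun _ ↦ v := by
  induction j generalizing s with
  | zero => simp
  | succ j ih =>
    have hline : HasDerivAt (fun t : ℝ ↦ y + t • v) v s := by
      simpa using ((hasDerivAt_id s).smul_const v).const_add y
    have hdiff : DifferentiableAt ℝ (iteratedFDeriv ℝ j f) (y + s • v) :=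
      hf.differentiable_iteratedFDeriv (by exact_mod_cast hj) _
    rw [iteratedDeriv_succ, funext (ih (Nat.le_of_succ_le hj)), iteratedFDeriv_succ_apply_left]
    let evalConst := ContinuousMultilinearMap.apply ℝ (fun _ : Fin j ↦ E) F fun _ ↦ v
    exact (evalConst.hasFDerivAt.comp_hasDerivAt s
      (hdiff.hasFDerivAt.comp_hasDerivAt s hline)).deriv

theorem iteratedFDeriv_apply_smul_const {f : E → F} (j : ℕ) (y v : E) (c : ℝ) :
    (iteratedFDeriv ℝ j f y fun _ ↦ c • v) = c ^ j • iteratedFDeriv ℝ j f y fun _ ↦ v := by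
  simpa using (iteratedFDeriv ℝ j f y).map_smul_univ (fun _ ↦ c) fun _ ↦ v

theorem exists_eventually_norm_iteratedFDeriv_le {f : E → F} {n : ℕ} (hf : ContDiff ℝ n f) (x : E) :
    ∃ M, ∀ᶠ y in 𝓝 x, ∀ j ≤ n, ‖iteratedFDeriv ℝ j f y‖ ≤ M := by
  have hcont (j : ℕ) (hj : j ≤ n) : Continuous (iteratedFDeriv ℝ j f) :=
    hf.continuous_iteratedFDeriv (by exact_mod_cast hj)
  let D : E → ℝ := fun y ↦ ∑ j ∈ Finset.range (n + 1), ‖iteratedFDeriv ℝ j f y‖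
  have hD : Continuous D := continuous_finsetSum _ fun j hj ↦
    (hcont j (Finset.mem_range_succ_iff.mp hj)).norm
  refine ⟨D x + 1, (hD.continuousAt.eventually_lt_const (lt_add_one (D x))).mono fun y hy j hj ↦ ?_⟩
  exact (Finset.single_le_sum (f := fun j ↦ ‖iteratedFDeriv ℝ j f y‖) (fun _ _ ↦ norm_nonneg _)
    (Finset.mem_range_succ_iff.mpr hj)).trans hy.le

end Taylor

section ProductDefect

/-- The error of the corrected product formula for the mean of `φ * ψ` over `[0, 1]`: the product
of the two means over `[0, 1]`, plus `1 / 12` times the product of the centered differences of the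
means over `[1, 2]` and `[-1, 0]`, minus the mean of the product. -/
def productDefect (φ ψ : ℝ → ℝ) : ℝ :=
  (∫ s in (0 : ℝ)..1, φ s) * (∫ s in (0 : ℝ)..1, ψ s)
    + 1 / 48 * ((∫ s in (1 : ℝ)..2, φ s) - ∫ s in (-1 : ℝ)..0, φ s)
      * ((∫ s in (1 : ℝ)..2, ψ s) - ∫ s in (-1 : ℝ)..0, ψ s)
    - ∫ s in (0 : ℝ)..1, φ s * ψ s

theorem productDefect_comm (φ ψ : ℝ → ℝ) : productDefect φ ψ = productDefect ψ φ := by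
  simp only [productDefect, mul_comm (φ _)]
  ring

theorem productDefect_sub_left {φ₁ φ₂ ψ : ℝ → ℝ} (h₁ : Continuous φ₁) (h₂ : Continuous φ₂)
    (hψ : Continuous ψ) :
    productDefect (fun s ↦ φ₁ s - φ₂ s) ψ = productDefect φ₁ ψ - productDefect φ₂ ψ := by
  have hsub (a b : ℝ) : ∫ s in a..b, (φ₁ s - φ₂ s) = (∫ s in a..b, φ₁ s) - ∫ s in a..b, φ₂ s :=
    intervalIntegral.integral_sub (h₁.intervalIntegrable _ _) (h₂.intervalIntegrable _ _)
  have hsub_mul : ∫ s in (0 : ℝ)..1, (φ₁ s - φ₂ s) * ψ s =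
      (∫ s in (0 : ℝ)..1, φ₁ s * ψ s) - ∫ s in (0 : ℝ)..1, φ₂ s * ψ s := by
    simp only [sub_mul]
    exact intervalIntegral.integral_sub ((h₁.mul hψ).intervalIntegrable _ _)
      ((h₂.mul hψ).intervalIntegrable _ _)
  simp only [productDefect, hsub, hsub_mul]
  ring

theorem productDefect_sub_right {φ ψ₁ ψ₂ : ℝ → ℝ} (hφ : Continuous φ) (h₁ : Continuous ψ₁)
    (h₂ : Continuous ψ₂) :
    productDefect φ (fun s ↦ ψ₁ s - ψ₂ s) = productDefect φ ψ₁ - productDefect φ ψ₂ := by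
  simp only [productDefect_comm φ, productDefect_sub_left h₁ h₂ hφ]

theorem productDefect_const_left (c : ℝ) (ψ : ℝ → ℝ) : productDefect (fun _ ↦ c) ψ = 0 := by
  simp only [productDefect, intervalIntegral.integral_const, intervalIntegral.integral_const_mul]
  norm_num

theorem productDefect_const_right (φ : ℝ → ℝ) (c : ℝ) : productDefect φ (fun _ ↦ c) = 0 := by
  rw [productDefect_comm, productDefect_const_left]

/-- Subtracting the constants `b` and `c` is free, so both remainders `φ - p` and `ψ - q` get paired
with a small function. -/
theorem productDefect_sub_productDefect {φ p ψ q : ℝ → ℝ} (hφ : Continuous φ) (hp : Continuous p)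
    (hψ : Continuous ψ) (hq : Continuous q) (b c : ℝ) :
    productDefect φ ψ - productDefect p q =
      productDefect (fun s ↦ φ s - p s) (fun s ↦ ψ s - c)
        + productDefect (fun s ↦ φ s - b) (fun s ↦ ψ s - q s)
        - productDefect (fun s ↦ φ s - p s) (fun s ↦ ψ s - q s) := by
  have hrem : Continuous fun s ↦ φ s - p s := hφ.sub hp
  have hosc : Continuous fun s ↦ φ s - b := hφ.sub continuous_const
  rw [productDefect_sub_right hrem hψ continuous_const, productDefect_const_right,
    productDefect_sub_right hosc hψ hq, productDefect_sub_right hrem hψ hq]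
  simp only [productDefect_sub_left hφ hp, productDefect_sub_left hφ continuous_const,
    productDefect_const_left, hψ, hq]
  ring

theorem abs_integral_add_one_le {φ : ℝ → ℝ} {A a : ℝ} (hφ : ∀ s ∈ Set.Icc a (a + 1), |φ s| ≤ A) :
    |∫ s in a..(a + 1), φ s| ≤ A := by
  have ha : a ≤ a + 1 := by linarith
  simpa using intervalIntegral.norm_integral_le_of_norm_le_const (f := φ) (C := A) fun s hs ↦
    hφ s (Set.Ioc_subset_Icc_self (Set.uIoc_of_le ha ▸ hs))

theorem abs_productDefect_le {φ ψ : ℝ → ℝ} {A B : ℝ} (hφ : ∀ s ∈ Set.Icc (-1 : ℝ) 2, |φ s| ≤ A)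
    (hψ : ∀ s ∈ Set.Icc (-1 : ℝ) 2, |ψ s| ≤ B) : |productDefect φ ψ| ≤ 3 * (A * B) := by
  have hA : 0 ≤ A := (abs_nonneg _).trans (hφ 0 (by norm_num))
  have hB : 0 ≤ B := (abs_nonneg _).trans (hψ 0 (by norm_num))
  have mean_le {θ : ℝ → ℝ} {K : ℝ} (hθ : ∀ s ∈ Set.Icc (-1 : ℝ) 2, |θ s| ≤ K) :
      |∫ s in (0 : ℝ)..1, θ s| ≤ K := by
    simpa using abs_integral_add_one_le (a := 0) fun s hs ↦
      hθ s (Set.Icc_subset_Icc (by norm_num) (by norm_num) hs)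
  have diff_le {θ : ℝ → ℝ} {K : ℝ} (hθ : ∀ s ∈ Set.Icc (-1 : ℝ) 2, |θ s| ≤ K) :
      |(∫ s in (1 : ℝ)..2, θ s) - ∫ s in (-1 : ℝ)..0, θ s| ≤ 2 * K := by
    have hright := abs_integral_add_one_le (a := 1) fun s hs ↦
      hθ s (Set.Icc_subset_Icc (by norm_num) (by norm_num) hs)
    have hleft := abs_integral_add_one_le (a := -1) fun s hs ↦
      hθ s (Set.Icc_subset_Icc (by norm_num) (by norm_num) hs)
    norm_num at hright hleft
    exact (abs_sub _ _).trans (by linarith)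
  have hmeans := mul_le_mul (mean_le hφ) (mean_le hψ) (abs_nonneg _) hA
  have hdiffs := mul_le_mul (diff_le hφ) (diff_le hψ) (abs_nonneg _) (by positivity)
  have hprod := mean_le (θ := fun s ↦ φ s * ψ s) (K := A * B) fun s hs ↦ by
    rw [abs_mul]
    exact mul_le_mul (hφ s hs) (hψ s hs) (abs_nonneg _) hA
  rw [← abs_mul] at hmeans hdiffs
  rw [productDefect, mul_assoc (1 / 48 : ℝ)]
  have := mul_nonneg hA hB
  rw [abs_le] at *
  constructor <;> linarith

theorem integral_sum_mul_pow (a : ℕ → ℝ) (n : ℕ) (b c : ℝ) :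
    ∫ s in b..c, ∑ j ∈ Finset.range n, a j * s ^ j =
      ∑ j ∈ Finset.range n, a j * ((c ^ (j + 1) - b ^ (j + 1)) / (j + 1)) := by
  rw [intervalIntegral.integral_finsetSum fun j _ ↦
    (by fun_prop : Continuous fun s : ℝ ↦ a j * s ^ j).intervalIntegrable _ _]
  simp only [intervalIntegral.integral_const_mul, integral_pow]

theorem integral_sum_mul_pow_mul_sum_mul_pow (a b : ℕ → ℝ) (m n : ℕ) :
    ∫ s in (0 : ℝ)..1, (∑ j ∈ Finset.range m, a j * s ^ j) * ∑ k ∈ Finset.range n, b k * s ^ k =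
      ∑ j ∈ Finset.range m, ∑ k ∈ Finset.range n, a j * b k / (j + k + 1) := by
  have hcont (j k : ℕ) : Continuous fun s : ℝ ↦ a j * s ^ j * (b k * s ^ k) := by fun_prop
  simp only [Finset.sum_mul_sum]
  rw [intervalIntegral.integral_finsetSum fun j _ ↦
    (continuous_finsetSum _ fun k _ ↦ hcont j k).intervalIntegrable _ _]
  refine Finset.sum_congr rfl fun j _ ↦ ?_
  rw [intervalIntegral.integral_finsetSum fun k _ ↦ (hcont j k).intervalIntegrable _ _]
  refine Finset.sum_congr rfl fun k _ ↦ ?_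
  simp only [mul_mul_mul_comm (a j), ← pow_add, intervalIntegral.integral_const_mul, integral_pow]
  simp [div_eq_mul_inv]

theorem productDefect_cubic (a b : ℕ → ℝ) :
    productDefect (fun s ↦ ∑ j ∈ Finset.range 4, a j * s ^ j)
        (fun s ↦ ∑ j ∈ Finset.range 4, b j * s ^ j) =
      11 / 120 * (a 1 * b 3 + a 3 * b 1) - 1 / 180 * (a 2 * b 2)
        + 1 / 12 * (a 2 * b 3 + a 3 * b 2) + 85 / 336 * (a 3 * b 3) := by
  rw [productDefect, integral_sum_mul_pow_mul_sum_mul_pow]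
  simp only [integral_sum_mul_pow]
  simp only [Finset.sum_range_succ, Finset.sum_range_zero]
  push_cast
  ring

/-- The leading term of `productDefect φ ψ` when the `j`-th derivatives of `φ` and `ψ` at `0` are
`a j` and `b j`. -/
def productDefectLeading (a b : ℕ → ℝ) : ℝ :=
  (11 * (a 1 * b 3 + a 3 * b 1) - a 2 * b 2) / 720

/-- The Taylor polynomial of `φ` at `0` of degree `3`, as a sum of monomials. -/
def taylorCubic (φ : ℝ → ℝ) (s : ℝ) : ℝ :=
  ∑ j ∈ Finset.range 4, iteratedDeriv j φ 0 / j.factorial * s ^ j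

theorem continuous_taylorCubic (φ : ℝ → ℝ) : Continuous (taylorCubic φ) := by
  unfold taylorCubic
  fun_prop

theorem productDefect_taylorCubic (φ ψ : ℝ → ℝ) :
    productDefect (taylorCubic φ) (taylorCubic ψ) =
      productDefectLeading (iteratedDeriv · φ 0) (iteratedDeriv · ψ 0)
        + (iteratedDeriv 2 φ 0 * iteratedDeriv 3 ψ 0
          + iteratedDeriv 3 φ 0 * iteratedDeriv 2 ψ 0) / 144
        + 85 / 12096 * (iteratedDeriv 3 φ 0 * iteratedDeriv 3 ψ 0) := by
  refine (productDefect_cubic (fun j ↦ iteratedDeriv j φ 0 / j.factorial)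
    fun j ↦ iteratedDeriv j ψ 0 / j.factorial).trans ?_
  norm_num [productDefectLeading, Nat.factorial]
  ring

theorem abs_sub_sum_iteratedDeriv_zero_le {φ : ℝ → ℝ} {n : ℕ} (hφ : ContDiff ℝ (n + 1) φ) {K : ℝ}
    (hK : ∀ s ∈ Set.Icc (-1 : ℝ) 2, |iteratedDeriv (n + 1) φ s| ≤ K) {s : ℝ}
    (hs : s ∈ Set.Icc (-1 : ℝ) 2) :
    |φ s - ∑ j ∈ Finset.range (n + 1), iteratedDeriv j φ 0 / j.factorial * s ^ j| ≤
      K * 2 ^ (n + 1) / (n + 1).factorial := by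
  have hzero : (0 : ℝ) ∈ Set.Icc (-1 : ℝ) 2 := by norm_num
  have htaylor := abs_sub_sum_iteratedDeriv_le hφ (x₀ := 0) (x := s) fun t ht ↦
    hK t (Set.uIcc_subset_Icc hzero hs ht)
  have hK₀ : 0 ≤ K := (abs_nonneg _).trans (hK 0 hzero)
  simp only [sub_zero] at htaylor
  refine htaylor.trans ?_
  gcongr
  exact abs_le.mpr ⟨by linarith [hs.1], hs.2⟩

theorem abs_sub_taylorCubic_le {φ : ℝ → ℝ} (hφ : ContDiff ℝ 4 φ) {K : ℝ}
    (hK : ∀ s ∈ Set.Icc (-1 : ℝ) 2, |iteratedDeriv 4 φ s| ≤ K) :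
    ∀ s ∈ Set.Icc (-1 : ℝ) 2, |φ s - taylorCubic φ s| ≤ K := fun s hs ↦ by
  have h := abs_sub_sum_iteratedDeriv_zero_le (n := 3) (by exact_mod_cast hφ) hK hs
  have hK₀ : 0 ≤ K := (abs_nonneg _).trans (hK s hs)
  norm_num [Nat.factorial] at h
  refine (h.trans ?_)
  linarith

theorem abs_sub_apply_zero_le {φ : ℝ → ℝ} (hφ : ContDiff ℝ 1 φ) {K : ℝ}
    (hK : ∀ s ∈ Set.Icc (-1 : ℝ) 2, |iteratedDeriv 1 φ s| ≤ K) :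
    ∀ s ∈ Set.Icc (-1 : ℝ) 2, |φ s - φ 0| ≤ 2 * K := fun s hs ↦ by
  simpa [mul_comm] using
    abs_sub_sum_iteratedDeriv_zero_le (n := 0) (by simpa using hφ) (by simpa using hK) hs

theorem abs_productDefect_sub_taylorCubic_le {φ ψ : ℝ → ℝ} (hφ : ContDiff ℝ 4 φ)
    (hψ : ContDiff ℝ 4 ψ) {M N ε : ℝ} (hε₀ : 0 ≤ ε) (hε₁ : ε ≤ 1)
    (hM : ∀ j ∈ Set.Icc 1 4, ∀ s ∈ Set.Icc (-1 : ℝ) 2, |iteratedDeriv j φ s| ≤ M * ε ^ j)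
    (hN : ∀ j ∈ Set.Icc 1 4, ∀ s ∈ Set.Icc (-1 : ℝ) 2, |iteratedDeriv j ψ s| ≤ N * ε ^ j) :
    |productDefect φ ψ - productDefect (taylorCubic φ) (taylorCubic ψ)| ≤
      15 * (M * N * ε ^ 5) := by
  have hφ_rem := abs_sub_taylorCubic_le hφ (hM 4 (by norm_num))
  have hψ_rem := abs_sub_taylorCubic_le hψ (hN 4 (by norm_num))
  have hφ_osc := abs_sub_apply_zero_le (hφ.of_le (by norm_num)) (hM 1 (by norm_num))
  have hψ_osc := abs_sub_apply_zero_le (hψ.of_le (by norm_num)) (hN 1 (by norm_num))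
  have hpow : M * N * ε ^ 5 * ε ^ 3 ≤ M * N * ε ^ 5 := by
    refine mul_le_of_le_one_right ?_ (pow_le_one₀ hε₀ hε₁)
    have hM₁ := (abs_nonneg _).trans (hM 1 (by norm_num) 0 (by norm_num))
    have hN₄ := (abs_nonneg _).trans (hN 4 (by norm_num) 0 (by norm_num))
    linarith [mul_nonneg hM₁ hN₄]
  rw [productDefect_sub_productDefect hφ.continuous (continuous_taylorCubic φ)
    hψ.continuous (continuous_taylorCubic ψ) (φ 0) (ψ 0)]
  refine (abs_sub _ _).trans ?_
  refine (add_le_add (abs_add_le _ _) le_rfl).trans ?_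
  linarith [abs_productDefect_le hφ_rem hψ_osc, abs_productDefect_le hφ_osc hψ_rem,
    abs_productDefect_le hφ_rem hψ_rem]

theorem abs_productDefect_taylorCubic_sub_leading_le {φ ψ : ℝ → ℝ} {M N ε : ℝ} (hε₁ : ε ≤ 1)
    (hM : ∀ j ∈ Set.Icc 2 3, |iteratedDeriv j φ 0| ≤ M * ε ^ j)
    (hN : ∀ j ∈ Set.Icc 2 3, |iteratedDeriv j ψ 0| ≤ N * ε ^ j) :
    |productDefect (taylorCubic φ) (taylorCubic ψ)
        - productDefectLeading (iteratedDeriv · φ 0) (iteratedDeriv · ψ 0)| ≤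
      M * N * ε ^ 5 := by
  have hcoeff {j k : ℕ} (hj : j ∈ Set.Icc 2 3) (hk : k ∈ Set.Icc 2 3) :
      |iteratedDeriv j φ 0 * iteratedDeriv k ψ 0| ≤ M * N * ε ^ (j + k) := by
    rw [abs_mul, pow_add, mul_mul_mul_comm]
    exact mul_le_mul (hM j hj) (hN k hk) (abs_nonneg _) ((abs_nonneg _).trans (hM j hj))
  have h₂₃ : |_| ≤ M * N * ε ^ 5 := hcoeff (j := 2) (k := 3) (by norm_num) (by norm_num)
  have h₃₂ : |_| ≤ M * N * ε ^ 5 := hcoeff (j := 3) (k := 2) (by norm_num) (by norm_num)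
  have h₃₃ : |_| ≤ M * N * ε ^ 5 * ε :=
    (hcoeff (j := 3) (k := 3) (by norm_num) (by norm_num)).trans_eq (by ring)
  have hpow : M * N * ε ^ 5 * ε ≤ M * N * ε ^ 5 :=
    mul_le_of_le_one_right ((abs_nonneg _).trans h₂₃) hε₁
  rw [productDefect_taylorCubic]
  rw [abs_le] at *
  constructor <;> linarith

theorem abs_productDefect_sub_leading_le {φ ψ : ℝ → ℝ} (hφ : ContDiff ℝ 4 φ) (hψ : ContDiff ℝ 4 ψ)
    {M N ε : ℝ} (hε₀ : 0 ≤ ε) (hε₁ : ε ≤ 1)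
    (hM : ∀ j ∈ Set.Icc 1 4, ∀ s ∈ Set.Icc (-1 : ℝ) 2, |iteratedDeriv j φ s| ≤ M * ε ^ j)
    (hN : ∀ j ∈ Set.Icc 1 4, ∀ s ∈ Set.Icc (-1 : ℝ) 2, |iteratedDeriv j ψ s| ≤ N * ε ^ j) :
    |productDefect φ ψ - productDefectLeading (iteratedDeriv · φ 0) (iteratedDeriv · ψ 0)| ≤
      16 * (M * N * ε ^ 5) := by
  have hzero : (0 : ℝ) ∈ Set.Icc (-1 : ℝ) 2 := by norm_num
  have hsub : Set.Icc 2 3 ⊆ Set.Icc 1 4 := Set.Icc_subset_Icc (by norm_num) (by norm_num)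
  linarith [abs_sub_le (productDefect φ ψ) (productDefect (taylorCubic φ) (taylorCubic ψ))
      (productDefectLeading (iteratedDeriv · φ 0) (iteratedDeriv · ψ 0)),
    abs_productDefect_sub_taylorCubic_le hφ hψ hε₀ hε₁ hM hN,
    abs_productDefect_taylorCubic_sub_leading_le hε₁ (fun j hj ↦ hM j (hsub hj) 0 hzero)
      fun j hj ↦ hN j (hsub hj) 0 hzero]

end ProductDefect

section LineDefect

variable {E : Type*} [NormedAddCommGroup E] [NormedSpace ℝ E]

/-- `productDefect` of the restrictions of `f` and `g` to the line through `y` with velocity `v`. -/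
def lineDefect (f g : E → ℝ) (y v : E) : ℝ :=
  productDefect (fun s ↦ f (y + s • v)) fun s ↦ g (y + s • v)

/-- The leading term of `lineDefect f g y v` as `v → 0`. -/
def lineDefectLeading (f g : E → ℝ) (y v : E) : ℝ :=
  productDefectLeading (fun j ↦ iteratedFDeriv ℝ j f y fun _ ↦ v)
    fun j ↦ iteratedFDeriv ℝ j g y fun _ ↦ v

theorem lineDefectLeading_smul (f g : E → ℝ) (y v : E) (c : ℝ) :
    lineDefectLeading f g y (c • v) = c ^ 4 * lineDefectLeading f g y v := by
  simp only [lineDefectLeading, productDefectLeading, iteratedFDeriv_apply_smul_const, smul_eq_mul]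
  ring

theorem differentiable_lineDefectLeading {f g : E → ℝ} (hf : ContDiff ℝ 4 f) (hg : ContDiff ℝ 4 g)
    (v : E) : Differentiable ℝ fun y ↦ lineDefectLeading f g y v := by
  have hderiv {k : E → ℝ} (hk : ContDiff ℝ 4 k) {j : ℕ} (hj : j < 4) :
      Differentiable ℝ fun y ↦ iteratedFDeriv ℝ j k y fun _ ↦ v := fun y ↦
    ((ContinuousMultilinearMap.apply ℝ (fun _ : Fin j ↦ E) ℝ fun _ ↦ v).differentiableAt).comp y
      (hk.differentiable_iteratedFDeriv (by exact_mod_cast hj) y)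
  have hf₁ := hderiv hf (j := 1) (by norm_num)
  have hf₂ := hderiv hf (j := 2) (by norm_num)
  have hf₃ := hderiv hf (j := 3) (by norm_num)
  have hg₁ := hderiv hg (j := 1) (by norm_num)
  have hg₂ := hderiv hg (j := 2) (by norm_num)
  have hg₃ := hderiv hg (j := 3) (by norm_num)
  unfold lineDefectLeading productDefectLeading
  fun_prop

theorem exists_eventually_forall_abs_iteratedDeriv_comp_line_le {f : E → ℝ} {n : ℕ}
    (hf : ContDiff ℝ n f) (x : E) {S : Set ℝ} (hS : IsCompact S) :
    ∃ M, ∀ᶠ p : E × E in 𝓝 (x, 0), ∀ j ≤ n, ∀ s ∈ S,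
      |iteratedDeriv j (fun t ↦ f (p.1 + t • p.2)) s| ≤ M * ‖p.2‖ ^ j := by
  obtain ⟨M, hM⟩ := exists_eventually_norm_iteratedFDeriv_le hf x
  have hline (s : ℝ) : Tendsto (fun q : (E × E) × ℝ ↦ q.1.1 + q.2 • q.1.2) (𝓝 ((x, 0), s)) (𝓝 x) :=
    Continuous.tendsto' (by fun_prop) _ _ (by simp)
  have hbound : ∀ᶠ p : E × E in 𝓝 (x, 0), ∀ s ∈ S, ∀ j ≤ n,
      ‖iteratedFDeriv ℝ j f (p.1 + s • p.2)‖ ≤ M :=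
    hS.eventually_forall_of_forall_eventually
      (P := fun (p : E × E) (s : ℝ) ↦ ∀ j ≤ n, ‖iteratedFDeriv ℝ j f (p.1 + s • p.2)‖ ≤ M)
      fun s _ ↦ (hline s).eventually hM
  refine ⟨M, hbound.mono fun p hp j hj s hs ↦ ?_⟩
  rw [iteratedDeriv_comp_line hf p.1 p.2 hj s, ← Real.norm_eq_abs]
  calc ‖iteratedFDeriv ℝ j f (p.1 + s • p.2) fun _ ↦ p.2‖
      ≤ ‖iteratedFDeriv ℝ j f (p.1 + s • p.2)‖ * ‖p.2‖ ^ j := by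
        simpa using (iteratedFDeriv ℝ j f (p.1 + s • p.2)).le_opNorm fun _ ↦ p.2
    _ ≤ M * ‖p.2‖ ^ j := by gcongr; exact hp s hs j hj

theorem lineDefect_sub_leading_isBigO {f g : E → ℝ} (hf : ContDiff ℝ 4 f) (hg : ContDiff ℝ 4 g)
    (x : E) :
    (fun p : E × E ↦ lineDefect f g p.1 p.2 - lineDefectLeading f g p.1 p.2)
      =O[𝓝 (x, 0)] fun p ↦ ‖p.2‖ ^ 5 := by
  obtain ⟨M, hM⟩ := exists_eventually_forall_abs_iteratedDeriv_comp_line_le (n := 4)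
    (by exact_mod_cast hf) x (isCompact_Icc (a := (-1 : ℝ)) (b := 2))
  obtain ⟨N, hN⟩ := exists_eventually_forall_abs_iteratedDeriv_comp_line_le (n := 4)
    (by exact_mod_cast hg) x (isCompact_Icc (a := (-1 : ℝ)) (b := 2))
  have hsmall : ∀ᶠ p : E × E in 𝓝 (x, 0), ‖p.2‖ ≤ 1 := by
    have hcont : Continuous fun p : E × E ↦ ‖p.2‖ := by fun_prop
    exact (hcont.tendsto' (x, 0) 0 (by simp)).eventually_le_const zero_lt_one
  refine IsBigO.of_bound (16 * (M * N)) ?_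
  filter_upwards [hM, hN, hsmall] with p hMp hNp hp
  have hleading : lineDefectLeading f g p.1 p.2 =
      productDefectLeading (fun j : ℕ ↦ iteratedDeriv j (fun s : ℝ ↦ f (p.1 + s • p.2)) 0)
        fun j : ℕ ↦ iteratedDeriv j (fun s : ℝ ↦ g (p.1 + s • p.2)) 0 := by
    have hzero {k : E → ℝ} (hk : ContDiff ℝ 4 k) {j : ℕ} (hj : j ≤ 4) :
        iteratedDeriv j (fun s : ℝ ↦ k (p.1 + s • p.2)) 0 =
          iteratedFDeriv ℝ j k p.1 fun _ ↦ p.2 := by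
      rw [iteratedDeriv_comp_line (n := 4) (by exact_mod_cast hk) p.1 p.2 hj 0, zero_smul, add_zero]
    simp only [lineDefectLeading, productDefectLeading, hzero hf (j := 1) (by norm_num),
      hzero hf (j := 2) (by norm_num), hzero hf (j := 3) (by norm_num),
      hzero hg (j := 1) (by norm_num), hzero hg (j := 2) (by norm_num),
      hzero hg (j := 3) (by norm_num)]
  rw [hleading, Real.norm_eq_abs, norm_pow, norm_norm, mul_assoc]
  exact abs_productDefect_sub_leading_le (by fun_prop) (by fun_prop) (norm_nonneg _) hp
    (fun j hj ↦ hMp j hj.2) fun j hj ↦ hNp j hj.2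

theorem lineDefect_add_smul_sub_lineDefect_isBigO {f g : E → ℝ} (hf : ContDiff ℝ 4 f)
    (hg : ContDiff ℝ 4 g) (x v w : E) :
    (fun h : ℝ ↦ lineDefect f g (x + h • v) (h • w) - lineDefect f g x (h • w))
      =O[𝓝 0] fun h ↦ h ^ 5 := by
  have hremainder {a : ℝ → E} (ha : Tendsto a (𝓝 0) (𝓝 x)) :
      (fun h ↦ lineDefect f g (a h) (h • w) - lineDefectLeading f g (a h) (h • w))
        =O[𝓝 0] fun h ↦ h ^ 5 := by
    have hsmul : Tendsto (fun h : ℝ ↦ h • w) (𝓝 0) (𝓝 0) :=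
      Continuous.tendsto' (by fun_prop) _ _ (zero_smul ℝ w)
    refine ((lineDefect_sub_leading_isBigO hf hg x).comp_tendsto
      (ha.prodMk_nhds hsmul)).trans (IsBigO.of_bound (‖w‖ ^ 5) (.of_forall fun h ↦ ?_))
    simp [norm_smul, mul_pow, mul_comm]
  have hshift : Tendsto (fun h : ℝ ↦ x + h • v) (𝓝 0) (𝓝 x) :=
    Continuous.tendsto' (by fun_prop) _ _ (by simp)
  have hleading : (fun h : ℝ ↦ lineDefectLeading f g (x + h • v) (h • w)
      - lineDefectLeading f g x (h • w)) =O[𝓝 0] fun h ↦ h ^ 5 := by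
    have hdiff := ((differentiable_lineDefectLeading hf hg w).comp
      (by fun_prop : Differentiable ℝ fun h : ℝ ↦ x + h • v)).differentiableAt (x := 0)
    refine ((isBigO_refl (fun h : ℝ ↦ h ^ 4) (𝓝 0)).mul hdiff.isBigO_sub).congr (fun h ↦ ?_)
      fun h ↦ ?_
    · simp [lineDefectLeading_smul, mul_sub]
    · rw [sub_zero, ← pow_succ]
  refine (((hremainder hshift).sub (hremainder tendsto_const_nhds)).add hleading).congr_left
    fun h ↦ ?_
  ring

end LineDefect

section SegmentAverage

theorem segAvg_eq_integral_line (f : EuclideanSpace ℝ (Fin 2) → ℝ)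
    (a v : EuclideanSpace ℝ (Fin 2)) (c : ℝ) :
    segAvg f (a + c • v) (a + c • v + v) = ∫ s in c..(c + 1), f (a + s • v) := by
  have hshift := intervalIntegral.integral_comp_add_right (a := 0) (b := 1)
    (fun s ↦ f (a + s • v)) c
  rw [zero_add, add_comm 1 c] at hshift
  rw [← hshift, segAvg]
  refine intervalIntegral.integral_congr fun s _ ↦ congrArg f ?_
  module

theorem integral_eq_mul_segAvg {f : EuclideanSpace ℝ (Fin 2) → ℝ} {g : ℝ → ℝ}
    {a v : EuclideanSpace ℝ (Fin 2)} {c : ℝ} (hg : ∀ t, g (c + t) = f (a + t • v)) (h : ℝ) :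
    ∫ t in c..(c + h), g t = h * segAvg f a (a + h • v) := by
  have hshift := intervalIntegral.integral_comp_add_left (a := 0) (b := h) g c
  have hscale := intervalIntegral.mul_integral_comp_mul_left (a := 0) (b := 1) (c := h)
    (f := fun t ↦ f (a + t • v))
  simp only [hg, add_zero, mul_zero, mul_one, mul_smul] at hshift hscale
  simp only [← hshift, ← hscale, segAvg, add_sub_cancel_left, smul_comm h]

/-- The corrected flux of the product `f * g` through the face from `a` to `b`: the product of the
face averages plus the transverse-gradient correction, where `d` is the direction of the face. -/
def correctedFlux (f g : EuclideanSpace ℝ (Fin 2) → ℝ) (h : ℝ) (d : Fin 2)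
    (a b : EuclideanSpace ℝ (Fin 2)) : ℝ :=
  segAvg f a b * segAvg g a b + (h ^ 2 / 12) * Gperp f h d a b * Gperp g h d a b

theorem Gperp_face_eq (f : EuclideanSpace ℝ (Fin 2) → ℝ) (h : ℝ) (d : Fin 2)
    (a : EuclideanSpace ℝ (Fin 2)) :
    Gperp f h d a (a + h • ev d) =
      ((∫ s in (1 : ℝ)..2, f (a + s • h • ev d)) - ∫ s in (-1 : ℝ)..0, f (a + s • h • ev d))
        / (2 * h) := by
  have hright := segAvg_eq_integral_line f a (h • ev d) 1
  have hleft := segAvg_eq_integral_line f a (h • ev d) (-1)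
  norm_num [← sub_eq_add_neg] at hright hleft
  simp [Gperp, hright, hleft]

theorem correctedFlux_face_eq (f g : EuclideanSpace ℝ (Fin 2) → ℝ) {h : ℝ} (hh : h ≠ 0)
    (d : Fin 2) (a : EuclideanSpace ℝ (Fin 2)) :
    correctedFlux f g h d a (a + h • ev d) =
      segAvg (fun y ↦ f y * g y) a (a + h • ev d) + lineDefect f g a (h • ev d) := by
  simp only [correctedFlux, Gperp_face_eq, segAvg, add_sub_cancel_left, lineDefect, productDefect]
  field_simp
  ring

end SegmentAverage

section Divergence

/-- The identification of `ℝ × ℝ` with the Euclidean plane, through which the divergence theorem on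
rectangles in `ℝ × ℝ` is transported to `fvCell`. -/
def planeChart : ℝ × ℝ →L[ℝ] EuclideanSpace ℝ (Fin 2) :=
  (ContinuousLinearMap.fst ℝ ℝ ℝ).smulRight (ev 0)
    + (ContinuousLinearMap.snd ℝ ℝ ℝ).smulRight (ev 1)

theorem planeChart_apply (p : ℝ × ℝ) : planeChart p = p.1 • ev 0 + p.2 • ev 1 := rfl

theorem planeChart_eq_toLp (p : ℝ × ℝ) : planeChart p = WithLp.toLp 2 ![p.1, p.2] := by
  ext i
  fin_cases i <;> simp [planeChart_apply, ev]

theorem planeChart_coord (y : EuclideanSpace ℝ (Fin 2)) : planeChart (y 0, y 1) = y := by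
  rw [planeChart_eq_toLp]
  ext i
  fin_cases i <;> rfl

theorem measurePreserving_planeChart : MeasurePreserving planeChart := by
  rw [funext planeChart_eq_toLp]
  exact (PiLp.volume_preserving_toLp (Fin 2)).comp (volume_preserving_finTwoArrow ℝ).symm

theorem measurableEmbedding_planeChart : MeasurableEmbedding planeChart := by
  rw [funext planeChart_eq_toLp]
  exact (MeasurableEquiv.toLp 2 (Fin 2 → ℝ)).measurableEmbedding.comp
    MeasurableEquiv.finTwoArrow.symm.measurableEmbedding

theorem planeChart_preimage_fvCell (x : EuclideanSpace ℝ (Fin 2)) (h : ℝ) :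
    planeChart ⁻¹' fvCell x h 0 = Set.Icc (x 0, x 1) (x 0 + h, x 1 + h) := by
  ext p
  simp [fvCell, planeChart_eq_toLp, Prod.le_def, and_and_and_comm]

theorem cellAvg_eq_integral_planeChart (f : EuclideanSpace ℝ (Fin 2) → ℝ)
    (x : EuclideanSpace ℝ (Fin 2)) (h : ℝ) :
    cellAvg f x h 0 =
      (1 / h ^ 2) * ∫ p in Set.Icc (x 0, x 1) (x 0 + h, x 1 + h), f (planeChart p) := by
  rw [cellAvg, ← planeChart_preimage_fvCell,
    measurePreserving_planeChart.setIntegral_preimage_emb measurableEmbedding_planeChart]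

theorem planeChart_coord_add (x : EuclideanSpace ℝ (Fin 2)) (s t : ℝ) :
    planeChart (x 0 + s, x 1 + t) = x + s • ev 0 + t • ev 1 := by
  nth_rw 3 [← planeChart_coord x]
  simp only [planeChart_apply]
  module

theorem integral_planeChart_horizontal (f : EuclideanSpace ℝ (Fin 2) → ℝ)
    (x : EuclideanSpace ℝ (Fin 2)) (t h : ℝ) :
    ∫ s in (x 0)..(x 0 + h), f (planeChart (s, x 1 + t)) =
      h * segAvg f (x + t • ev 1) (x + t • ev 1 + h • ev 0) :=
  integral_eq_mul_segAvg (g := fun s ↦ f (planeChart (s, x 1 + t)))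
    (fun s ↦ by rw [planeChart_coord_add, add_right_comm]) h

theorem integral_planeChart_vertical (f : EuclideanSpace ℝ (Fin 2) → ℝ)
    (x : EuclideanSpace ℝ (Fin 2)) (s h : ℝ) :
    ∫ t in (x 1)..(x 1 + h), f (planeChart (x 0 + s, t)) =
      h * segAvg f (x + s • ev 0) (x + s • ev 0 + h • ev 1) :=
  integral_eq_mul_segAvg (g := fun t ↦ f (planeChart (x 0 + s, t)))
    (fun t ↦ by rw [planeChart_coord_add]) h

theorem cellAvg_divergence {F : Fin 2 → EuclideanSpace ℝ (Fin 2) → ℝ}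
    (hF : ∀ d, ContDiff ℝ 1 (F d)) (x : EuclideanSpace ℝ (Fin 2)) {h : ℝ} (hh : 0 < h) :
    cellAvg (fun y ↦ ∑ d, fderiv ℝ (F d) y (ev d)) x h 0 =
      (1 / h) * ∑ d,
        (segAvg (F d) (x + h • ev d) (x + h • ev d + h • ev (otherIdx d))
          - segAvg (F d) x (x + h • ev (otherIdx d))) := by
  have hderiv (d : Fin 2) (p : ℝ × ℝ) : HasFDerivAt (fun p ↦ F d (planeChart p))
      ((fderiv ℝ (F d) (planeChart p)).comp planeChart) p :=
    ((hF d).differentiable one_ne_zero _).hasFDerivAt.comp p planeChart.hasFDerivAt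
  have hdiv (p : ℝ × ℝ) : (fderiv ℝ (F 0) (planeChart p)).comp planeChart (1, 0)
      + (fderiv ℝ (F 1) (planeChart p)).comp planeChart (0, 1)
        = ∑ d, fderiv ℝ (F d) (planeChart p) (ev d) := by
    simp [planeChart_apply]
  have hcont : Continuous fun p ↦ ∑ d, fderiv ℝ (F d) (planeChart p) (ev d) :=
    continuous_finsetSum _ fun d _ ↦ (((hF d).continuous_fderiv one_ne_zero).comp
      planeChart.continuous).clm_apply continuous_const
  have hbottom := integral_planeChart_horizontal (F 1) x 0 h
  have hleft := integral_planeChart_vertical (F 0) x 0 h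
  simp only [add_zero, zero_smul] at hbottom hleft
  have hstokes := integral_divergence_prod_Icc_of_hasFDerivAt_of_le _ _ _ _
    (x 0, x 1) (x 0 + h, x 1 + h) ⟨by simpa using hh.le, by simpa using hh.le⟩
    (continuous_iff_continuousAt.mpr fun p ↦ (hderiv 0 p).continuousAt).continuousOn
    (continuous_iff_continuousAt.mpr fun p ↦ (hderiv 1 p).continuousAt).continuousOn
    (fun p _ ↦ hderiv 0 p) (fun p _ ↦ hderiv 1 p)
    (by simpa only [hdiv] using hcont.continuousOn.integrableOn_compact isCompact_Icc)
  simp only [hdiv, integral_planeChart_horizontal, integral_planeChart_vertical, hbottom, hleft]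
    at hstokes
  rw [cellAvg_eq_integral_planeChart, hstokes]
  simp only [Fin.sum_univ_two, otherIdx, if_true, one_ne_zero, if_false]
  field_simp
  ring

end Divergence

section Advection

/-- The discrete divergence of the corrected face fluxes of `ρ u` over the cell `x + [0, h]²`. -/
def fluxDivergence (ρ : EuclideanSpace ℝ (Fin 2) → ℝ)
    (u : EuclideanSpace ℝ (Fin 2) → EuclideanSpace ℝ (Fin 2)) (x : EuclideanSpace ℝ (Fin 2))
    (h : ℝ) : ℝ :=
  (1 / h) * ∑ d : Fin 2,
    (correctedFlux ρ (fun y ↦ u y d) h (otherIdx d) (x + h • ev d)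
        (x + h • ev d + h • ev (otherIdx d))
      - correctedFlux ρ (fun y ↦ u y d) h (otherIdx d) x (x + h • ev (otherIdx d)))

variable {ρ : EuclideanSpace ℝ (Fin 2) → ℝ}
  {u : EuclideanSpace ℝ (Fin 2) → EuclideanSpace ℝ (Fin 2)}

theorem sum_fderiv_mul_of_divergence_eq_zero {y : EuclideanSpace ℝ (Fin 2)}
    (hρ : DifferentiableAt ℝ ρ y) (hu : DifferentiableAt ℝ u y)
    (hdiv : ∑ i : Fin 2, fderiv ℝ (fun z ↦ u z i) y (ev i) = 0) :
    ∑ i : Fin 2, fderiv ℝ (fun z ↦ ρ z * u z i) y (ev i) =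
      ∑ i : Fin 2, u y i * fderiv ℝ ρ y (ev i) := by
  have hproduct (i : Fin 2) : fderiv ℝ (fun z ↦ ρ z * u z i) y (ev i) =
      ρ y * fderiv ℝ (fun z ↦ u z i) y (ev i) + u y i * fderiv ℝ ρ y (ev i) := by
    rw [fderiv_fun_mul hρ (differentiableAt_euclidean.mp hu i)]
    rfl
  rw [Finset.sum_congr rfl fun i _ ↦ hproduct i, Finset.sum_add_distrib, ← Finset.mul_sum, hdiv,
    mul_zero, zero_add]

theorem fluxDivergence_sub_cellAvg_eq (hρ : ContDiff ℝ 1 ρ) (hu : ContDiff ℝ 1 u)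
    (x : EuclideanSpace ℝ (Fin 2)) {h : ℝ} (hh : 0 < h) :
    fluxDivergence ρ u x h
        - cellAvg (fun y ↦ ∑ i : Fin 2, fderiv ℝ (fun z ↦ ρ z * u z i) y (ev i)) x h 0 =
      (1 / h) * ∑ d : Fin 2,
        (lineDefect ρ (fun y ↦ u y d) (x + h • ev d) (h • ev (otherIdx d))
          - lineDefect ρ (fun y ↦ u y d) x (h • ev (otherIdx d))) := by
  have hflux (d : Fin 2) : ContDiff ℝ 1 fun y ↦ ρ y * u y d :=
    hρ.mul (contDiff_euclidean.mp hu d)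
  rw [fluxDivergence, cellAvg_divergence hflux x hh, ← mul_sub, ← Finset.sum_sub_distrib]
  simp only [correctedFlux_face_eq _ _ hh.ne']
  congr 1
  refine Finset.sum_congr rfl fun d _ ↦ ?_
  ring

theorem fluxDivergence_sub_cellAvg_isBigO (hρ : ContDiff ℝ 4 ρ) (hu : ContDiff ℝ 4 u)
    (x : EuclideanSpace ℝ (Fin 2)) :
    (fun h : ℝ ↦ fluxDivergence ρ u x h
        - cellAvg (fun y ↦ ∑ i : Fin 2, fderiv ℝ (fun z ↦ ρ z * u z i) y (ev i)) x h 0)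
      =O[𝓝[>] 0] fun h ↦ h ^ 4 := by
  have hdefect : (fun h : ℝ ↦ ∑ d : Fin 2,
      (lineDefect ρ (fun y ↦ u y d) (x + h • ev d) (h • ev (otherIdx d))
        - lineDefect ρ (fun y ↦ u y d) x (h • ev (otherIdx d)))) =O[𝓝[>] 0] fun h ↦ h ^ 5 :=
    (IsBigO.fun_sum fun d _ ↦ lineDefect_add_smul_sub_lineDefect_isBigO hρ
      (contDiff_euclidean.mp hu d) x (ev d) (ev (otherIdx d))).mono nhdsWithin_le_nhds
  have hpos : ∀ᶠ h : ℝ in 𝓝[>] 0, 0 < h := eventually_mem_nhdsWithin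
  refine ((isBigO_refl (fun h : ℝ ↦ 1 / h) (𝓝[>] 0)).mul hdefect).congr' ?_ ?_
  · filter_upwards [hpos] with h hh
    exact (fluxDivergence_sub_cellAvg_eq (hρ.of_le (by norm_num)) (hu.of_le (by norm_num))
      x hh).symm
  · filter_upwards [hpos] with h hh
    field_simp

end Advection

theorem exists_forall_abs_le_of_isBigO_pow {F : ℝ → ℝ} {n : ℕ}
    (hF : F =O[𝓝[>] 0] fun h ↦ h ^ n) :
    ∃ C > (0 : ℝ), ∃ h₀ > (0 : ℝ), ∀ h : ℝ, 0 < h → h < h₀ → |F h| ≤ C * h ^ n := by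
  obtain ⟨C, hC, hbound⟩ := hF.exists_pos
  obtain ⟨h₀, hh₀, hle⟩ := mem_nhdsGT_iff_exists_Ioo_subset.mp hbound.bound
  refine ⟨C, hC, h₀, hh₀, fun h hpos hlt ↦ ?_⟩
  simpa [abs_of_pos hpos] using hle ⟨hpos, hlt⟩

theorem conservative_advection_fourth_order_general (x : EuclideanSpace ℝ (Fin 2))
    (ρ : EuclideanSpace ℝ (Fin 2) → ℝ)
    (u : EuclideanSpace ℝ (Fin 2) → EuclideanSpace ℝ (Fin 2))
    (hρ : ContDiff ℝ 4 ρ) (hu : ContDiff ℝ 4 u) :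
    ∃ C > (0 : ℝ), ∃ h₀ > (0 : ℝ), ∀ h : ℝ, 0 < h → h < h₀ →
      |fluxDivergence ρ u x h
          - cellAvg (fun y ↦ ∑ i : Fin 2, fderiv ℝ (fun z ↦ ρ z * u z i) y (ev i)) x h 0|
        ≤ C * h ^ 4 :=
  exists_forall_abs_le_of_isBigO_pow (fluxDivergence_sub_cellAvg_isBigO hρ hu x)

/-- Fourth-order accuracy of the conservative advection discretization: for a
divergence-free `C⁵` velocity `u` and a `C⁵` scalar `ρ`, the sum of corrected
face fluxes over the faces of the cell `x + [0,h]²` approximates the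
cell average of `u · ∇ρ` to `O(h⁴)`. -/
theorem conservative_advection_fourth_order (x : EuclideanSpace ℝ (Fin 2))
    (ρ : EuclideanSpace ℝ (Fin 2) → ℝ)
    (u : EuclideanSpace ℝ (Fin 2) → EuclideanSpace ℝ (Fin 2))
    (hρ : ContDiff ℝ 5 ρ) (hu : ContDiff ℝ 5 u)
    (hdiv : ∀ y, ∑ i : Fin 2, fderiv ℝ (fun z => u z i) y (ev i) = 0) :
    ∃ C > (0 : ℝ), ∃ h₀ > (0 : ℝ), ∀ h : ℝ, 0 < h → h < h₀ →
      |(1 / h) * ∑ d : Fin 2,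
          ((segAvg ρ (x + h • ev d) (x + h • ev d + h • ev (otherIdx d)) *
              segAvg (fun y => u y d) (x + h • ev d) (x + h • ev d + h • ev (otherIdx d))
            + (h ^ 2 / 12) *
              Gperp ρ h (otherIdx d) (x + h • ev d) (x + h • ev d + h • ev (otherIdx d)) *
              Gperp (fun y => u y d) h (otherIdx d) (x + h • ev d)
                (x + h • ev d + h • ev (otherIdx d)))
          - (segAvg ρ x (x + h • ev (otherIdx d)) *
              segAvg (fun y => u y d) x (x + h • ev (otherIdx d))
            + (h ^ 2 / 12) *
              Gperp ρ h (otherIdx d) x (x + h • ev (otherIdx d)) *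
              Gperp (fun y => u y d) h (otherIdx d) x (x + h • ev (otherIdx d))))
        - cellAvg (fun y => ∑ i : Fin 2, u y i * fderiv ℝ ρ y (ev i)) x h 0|
        ≤ C * h ^ 4 := by
  simpa only [fluxDivergence, correctedFlux, sum_fderiv_mul_of_divergence_eq_zero
    (hρ.differentiable (by norm_num) _) (hu.differentiable (by norm_num) _) (hdiv _)] using
    conservative_advection_fourth_order_general x ρ u (hρ.of_le (by norm_num))
      (hu.of_le (by norm_num))
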